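/- Every 2-connected chordal graph H on i+1 vertices (i ≥ 1) is isomorphic to a graph on vertex set {0,1,...,i} in which: 0 and 1 are adjacent; for every j ∈ {1,...,i−1}, vertex j+1 has at least 2 neighbours in {0,...,j}; and for every j ∈ {1,...,i−1}, the neighbours of j+1 in {0,...,j} form a clique. -/

import Mathlib

/-- The graph `H` with only the edges inside `A` kept. -/
def restr {V : Type*} (H : SimpleGraph V) (A : Set V) : SimpleGraph V where
  Adj a b := H.Adj a b ∧ a ∈ A ∧ b ∈ A
  symm := ⟨fun _ _ h => ⟨h.1.symm, h.2.2, h.2.1⟩⟩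
  loopless := ⟨fun _ h => H.loopless.irrefl _ h.1⟩

/-- A shortest path through non-neighbours of `u` closes up to an induced cycle. -/
lemma no_short {V : Type*} (H : SimpleGraph V)
    (hch : ∀ m : ℕ, 4 ≤ m → IsEmpty (SimpleGraph.cycleGraph m ↪g H))
    (A : Set V) (u x y : V) (hx : x ∈ A) (hux : H.Adj u x) (huy : H.Adj u y)
    (hxy : x ≠ y) (hnxy : ¬ H.Adj x y) (huA : u ∉ A)
    (hA : ∀ z ∈ A, H.Adj u z → z = x ∨ z = y)
    (hr : (restr H A).Reachable x y) : False := by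
  obtain ⟨p, hp⟩ := hr.exists_walk_length_eq_dist
  set n := p.length with hn
  have hlev : ∀ a, a ≤ n → (restr H A).dist x (p.getVert a) = a := by
    intro a ha
    have h1 : (restr H A).dist x (p.getVert a) ≤ a := by
      refine (SimpleGraph.dist_le (p.take a)).trans ?_
      rw [SimpleGraph.Walk.take_length]; omega
    have h2 : (restr H A).dist (p.getVert a) y ≤ n - a := by
      refine (SimpleGraph.dist_le (p.drop a)).trans ?_
      rw [SimpleGraph.Walk.drop_length]
    have h3 : (restr H A).dist x y ≤
        (restr H A).dist x (p.getVert a) + (restr H A).dist (p.getVert a) y := by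
      exact SimpleGraph.Reachable.dist_triangle_left ⟨p.take a⟩ _
    omega
  have hstep : ∀ a, a < n → (restr H A).Adj (p.getVert a) (p.getVert (a+1)) :=
    fun a ha => p.adj_getVert_succ ha
  have hmem : ∀ a, a ≤ n → p.getVert a ∈ A := by
    intro a ha
    rcases Nat.eq_zero_or_pos a with h | h
    · subst h; simpa using hx
    · have := hstep (a-1) (by omega)
      rw [Nat.sub_add_cancel h] at this
      exact this.2.2
  have hadj : ∀ a b, a ≤ n → b ≤ n → (H.Adj (p.getVert a) (p.getVert b) ↔ a + 1 = b ∨ b + 1 = a) := by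
    intro a b ha hb
    constructor
    · intro h
      have h' : (restr H A).Adj (p.getVert a) (p.getVert b) := ⟨h, hmem a ha, hmem b hb⟩
      have hne : a ≠ b := by rintro rfl; exact h.ne rfl
      have h1 := SimpleGraph.Reachable.dist_triangle_left (G := restr H A) (u := x) (v := p.getVert a) ⟨p.take a⟩ (p.getVert b)
      have h2 := SimpleGraph.Reachable.dist_triangle_left (G := restr H A) (u := x) (v := p.getVert b) ⟨p.take b⟩ (p.getVert a)
      rw [SimpleGraph.dist_eq_one_iff_adj.2 h', hlev a ha, hlev b hb] at h1
      rw [SimpleGraph.dist_eq_one_iff_adj.2 h'.symm, hlev a ha, hlev b hb] at h2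
      omega
    · rintro (rfl | rfl)
      · exact (hstep a (by omega)).1
      · exact (hstep b (by omega)).1.symm
  have hinj : ∀ a b, a ≤ n → b ≤ n → p.getVert a = p.getVert b → a = b := by
    intro a b ha hb h
    rw [← hlev a ha, ← hlev b hb, h]
  have h0 : p.getVert 0 = x := by simp
  have hnn : p.getVert n = y := by simp [hn]
  have hn2 : 2 ≤ n := by
    by_contra hlt
    have : n = 0 ∨ n = 1 := by omega
    rcases this with h | h
    · rw [h] at hnn; exact hxy (h0.symm.trans hnn)
    · have := hstep 0 (by omega)
      rw [zero_add, h0, ← h, hnn] at this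
      exact hnxy this.1
  have hu : ∀ a, a ≤ n → (H.Adj u (p.getVert a) ↔ a = 0 ∨ a = n) := by
    intro a ha
    constructor
    · intro h
      rcases hA _ (hmem a ha) h with h | h
      · left; exact hinj _ _ ha (by omega) (h.trans h0.symm)
      · right; exact hinj _ _ ha le_rfl (h.trans hnn.symm)
    · rintro (rfl | rfl)
      · rwa [h0]
      · rwa [hnn]
  have hune : ∀ a, a ≤ n → u ≠ p.getVert a := fun a ha h => huA (h ▸ hmem a ha)
  refine (hch (n+2) (by omega)).false ⟨⟨fun k => if k.val ≤ n then p.getVert k.val else u, ?_⟩, ?_⟩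
  · intro a b h
    have := a.2
    have := b.2
    dsimp only at h
    apply Fin.ext
    split_ifs at h with ha hb hb
    · exact hinj _ _ ha hb h
    · exact (hune _ ha h.symm).elim
    · exact (hune _ hb h).elim
    · omega
  · intro a b
    have ha' := a.2
    have hb' := b.2
    have key : (SimpleGraph.cycleGraph (n+2)).Adj a b ↔
        (a.val + 1 = b.val ∨ b.val + 1 = a.val ∨ (a.val = 0 ∧ b.val = n+1) ∨ (b.val = 0 ∧ a.val = n+1)) := by
      rw [SimpleGraph.cycleGraph_adj']
      rcases lt_trichotomy a b with h | h | h
      · rw [Fin.coe_sub_iff_le.2 h.le, Fin.coe_sub_iff_lt.2 h]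
        have : a.val < b.val := h
        omega
      · subst h
        exact iff_of_false (by rw [sub_self]; simp) (by omega)
      · rw [Fin.coe_sub_iff_le.2 h.le, Fin.coe_sub_iff_lt.2 h]
        have : b.val < a.val := h
        omega
    rw [key]
    change H.Adj (if a.val ≤ n then p.getVert a.val else u) (if b.val ≤ n then p.getVert b.val else u) ↔ _
    split_ifs with ha hb hb
    · rw [hadj _ _ ha hb]; omega
    · rw [H.adj_comm, hu _ ha]; omega
    · rw [hu _ hb]; omega
    · have : a = b := Fin.ext (by omega)
      subst this
      exact iff_of_false (fun h => h.ne rfl) (by omega)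

/-- Dirac: simplicial vertices exist outside any clique that is not everything. -/
lemma exists_simplicial {V : Type*} (H : SimpleGraph V)
    (hch : ∀ m : ℕ, 4 ≤ m → IsEmpty (SimpleGraph.cycleGraph m ↪g H)) (T : Finset V) :
    ∀ K : Finset V, K ⊆ T → K ≠ T → (∀ a ∈ K, ∀ b ∈ K, a ≠ b → H.Adj a b) →
      ∃ v ∈ T, v ∉ K ∧ ∀ a ∈ T, ∀ b ∈ T, H.Adj v a → H.Adj v b → a ≠ b → H.Adj a b := by
  classical
  induction T using Finset.strongInduction with
  | H T ih =>
  intro K hKT hne hK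
  by_cases hcase : ∃ u ∈ T, (∃ w ∈ T, w ≠ u ∧ ¬ H.Adj u w) ∧ ∀ k ∈ K, k ≠ u → H.Adj u k
  · obtain ⟨u, huT, ⟨w, hwT, hwu, huw⟩, huK⟩ := hcase
    set B : Set V := {z | z ∈ T ∧ z ≠ u ∧ ¬ H.Adj u z} with hB
    have hwB : w ∈ B := ⟨hwT, hwu, huw⟩
    have hCB : ∀ z, (restr H B).Reachable w z → z ∈ B := by
      intro z hz
      rw [SimpleGraph.reachable_iff_reflTransGen] at hz
      rcases Relation.ReflTransGen.cases_tail hz with h | ⟨c, _, h⟩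
      · rw [h]; exact hwB
      · exact h.2.2
    set C := T.filter (fun z => (restr H B).Reachable w z) with hC
    set S := T.filter (fun s => s ∉ C ∧ ∃ c ∈ C, H.Adj s c) with hS
    have hCmem : ∀ z ∈ C, z ∈ B := fun z hz => hCB z (Finset.mem_filter.1 hz).2
    have hSu : ∀ s ∈ S, H.Adj u s := by
      intro s hs
      obtain ⟨hsT, hsC, c, hc, hsc⟩ := Finset.mem_filter.1 hs
      by_contra hus
      have hsu : s ≠ u := by
        rintro rfl
        exact (hCmem c hc).2.2 hsc
      apply hsC
      refine Finset.mem_filter.2 ⟨hsT, (Finset.mem_filter.1 hc).2.trans ?_⟩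
      exact SimpleGraph.Adj.reachable ⟨hsc.symm, hCmem c hc, hsT, hsu, hus⟩
    have hwC : w ∈ C := Finset.mem_filter.2 ⟨hwT, SimpleGraph.Reachable.refl _⟩
    have hSclique : ∀ a ∈ S, ∀ b ∈ S, a ≠ b → H.Adj a b := by
      intro a ha b hb hab
      by_contra hnab
      obtain ⟨-, -, c, hc, hac⟩ := Finset.mem_filter.1 ha
      obtain ⟨-, -, d, hd, hbd⟩ := Finset.mem_filter.1 hb
      set A : Set V := {z | z ∈ C ∨ z = a ∨ z = b} with hA
      have hreach : ∀ z, (restr H B).Reachable w z → (restr H A).Reachable w z := by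
        intro z hz
        have hz' := hz
        rw [SimpleGraph.reachable_iff_reflTransGen] at hz'
        induction hz' with
        | refl => exact SimpleGraph.Reachable.refl _
        | tail h1 h2 ih2 =>
          rename_i e f
          have he : (restr H B).Reachable w e := by
            rw [SimpleGraph.reachable_iff_reflTransGen]; exact h1
          refine (ih2 he).trans (SimpleGraph.Adj.reachable ⟨h2.1, ?_, ?_⟩)
          · exact Or.inl (Finset.mem_filter.2 ⟨(hCB _ he).1, he⟩)
          · exact Or.inl (Finset.mem_filter.2 ⟨(hCB _ hz).1, hz⟩)
      refine no_short H hch A u a b (Or.inr (Or.inl rfl)) (hSu a ha) (hSu b hb) hab hnab ?_ ?_ ?_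
      · rintro (h | h | h)
        · exact (hCmem _ h).2.1 rfl
        · exact (hSu a ha).ne h
        · exact (hSu b hb).ne h
      · rintro z (h | h) huz
        · exact ((hCmem _ h).2.2 huz).elim
        · exact h
      · have h1 : (restr H A).Reachable a c :=
          SimpleGraph.Adj.reachable ⟨hac, Or.inr (Or.inl rfl), Or.inl hc⟩
        have h2 : (restr H A).Reachable b d :=
          SimpleGraph.Adj.reachable ⟨hbd, Or.inr (Or.inr rfl), Or.inl hd⟩
        exact h1.trans ((hreach c (Finset.mem_filter.1 hc).2).symm.trans
          ((hreach d (Finset.mem_filter.1 hd).2).trans h2.symm))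
    have hsub : C ∪ S ⊂ T := by
      refine Finset.ssubset_iff_subset_ne.2 ⟨Finset.union_subset (Finset.filter_subset _ _)
        (Finset.filter_subset _ _), ?_⟩
      intro h
      rw [← h] at huT
      rcases Finset.mem_union.1 huT with h | h
      · exact (hCmem _ h).2.1 rfl
      · exact (hSu _ h).ne rfl
    have hSne : S ≠ C ∪ S := by
      intro h
      have : w ∈ S := by rw [h]; exact Finset.mem_union_left _ hwC
      exact (Finset.mem_filter.1 this).2.1 hwC
    obtain ⟨v, hv, hvS, hvs⟩ := ih _ hsub S Finset.subset_union_right hSne hSclique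
    have hvC : v ∈ C := (Finset.mem_union.1 hv).resolve_right hvS
    have hnb : ∀ a ∈ T, H.Adj v a → a ∈ C ∪ S := by
      intro a ha hva
      by_cases haC : a ∈ C
      · exact Finset.mem_union_left _ haC
      · exact Finset.mem_union_right _ (Finset.mem_filter.2 ⟨ha, haC, v, hvC, hva.symm⟩)
    refine ⟨v, (hCmem v hvC).1, ?_, ?_⟩
    · intro hvK
      exact (hCmem v hvC).2.2 (huK v hvK (hCmem v hvC).2.1)
    · intro a ha b hb hva hvb hab
      exact hvs a (hnb a ha hva) b (hnb b hb hvb) hva hvb hab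
  · push Not at hcase
    have huniv : ∀ k ∈ K, ∀ z ∈ T, z ≠ k → H.Adj k z := by
      intro k hk z hz hzk
      by_contra hn
      obtain ⟨k', hk', hne', hnadj⟩ := hcase k (hKT hk) ⟨z, hz, hzk, hn⟩
      exact hnadj (hK k hk k' hk' hne'.symm)
    rcases K.eq_empty_or_nonempty with rfl | hKne
    · obtain ⟨v, hv⟩ := Finset.nonempty_iff_ne_empty.2 hne.symm
      refine ⟨v, hv, by simp, ?_⟩
      intro a ha b hb _ _ hab
      by_contra hn
      obtain ⟨k', hk', _⟩ := hcase a ha ⟨b, hb, hab.symm, hn⟩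
      simp at hk'
    · have hss : T \ K ⊂ T := Finset.sdiff_ssubset hKT hKne
      have hTK : (∅ : Finset V) ≠ T \ K := by
        intro h
        exact hne (hKT.antisymm (Finset.sdiff_eq_empty_iff_subset.1 h.symm))
      obtain ⟨v, hv, -, hvs⟩ := ih _ hss ∅ (by simp) hTK (by simp)
      rw [Finset.mem_sdiff] at hv
      refine ⟨v, hv.1, hv.2, ?_⟩
      intro a ha b hb hva hvb hab
      by_cases haK : a ∈ K
      · exact huniv a haK b hb hab.symm
      by_cases hbK : b ∈ K
      · exact (huniv b hbK a ha hab).symm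
      exact hvs a (Finset.mem_sdiff.2 ⟨ha, haK⟩) b (Finset.mem_sdiff.2 ⟨hb, hbK⟩) hva hvb hab

/-- `S` stays connected inside after deleting at most one vertex. -/
def TwoConn {V : Type*} (H : SimpleGraph V) (S : Set V) : Prop :=
  ∀ X : Set V, X.Subsingleton → ∀ a ∈ S \ X, ∀ b ∈ S \ X, (restr H (S \ X)).Reachable a b

lemma exists_nbr {V : Type*} {H : SimpleGraph V} {A : Set V} {a b : V} (hab : a ≠ b)
    (h : (restr H A).Reachable a b) : ∃ y ∈ A, H.Adj a y := by
  rw [SimpleGraph.reachable_iff_reflTransGen] at h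
  rcases Relation.ReflTransGen.cases_head h with h | ⟨c, h, _⟩
  · exact (hab h).elim
  · exact ⟨c, h.2.2, h.1⟩

lemma TwoConn.erase {V : Type*} {H : SimpleGraph V} {S : Set V} (hS : TwoConn H S) (v : V)
    (hv : ∀ a ∈ S, ∀ b ∈ S, H.Adj v a → H.Adj v b → a ≠ b → H.Adj a b) :
    TwoConn H (S \ {v}) := by
  intro X hX a ha b hb
  have main : ∀ z, (restr H (S \ X)).Reachable a z →
      (z ≠ v → (restr H ((S \ {v}) \ X)).Reachable a z) ∧
      (z = v → ∀ y ∈ S \ X, H.Adj v y → (restr H ((S \ {v}) \ X)).Reachable a y) := by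
    intro z hz
    rw [SimpleGraph.reachable_iff_reflTransGen] at hz
    induction hz with
    | refl => exact ⟨fun _ => SimpleGraph.Reachable.refl _, fun h => (ha.1.2 h).elim⟩
    | tail h1 h2 ih =>
      rename_i e f
      constructor
      · intro hf
        by_cases he : e = v
        · exact ih.2 he f h2.2.2 (he ▸ h2.1)
        · refine (ih.1 he).trans (SimpleGraph.Adj.reachable ⟨h2.1, ?_, ?_⟩)
          · exact ⟨⟨h2.2.1.1, he⟩, h2.2.1.2⟩
          · exact ⟨⟨h2.2.2.1, hf⟩, h2.2.2.2⟩
      · rintro rfl y hy hfy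
        have he : e ≠ f := h2.1.ne
        by_cases hey : e = y
        · exact hey ▸ ih.1 he
        · refine (ih.1 he).trans (SimpleGraph.Adj.reachable ⟨?_, ?_, ?_⟩)
          · exact hv e h2.2.1.1 y hy.1 h2.1.symm hfy hey
          · exact ⟨⟨h2.2.1.1, he⟩, h2.2.1.2⟩
          · exact ⟨⟨hy.1, hfy.ne'⟩, hy.2⟩
  exact (main b (hS X hX a ⟨ha.1.1, ha.2⟩ b ⟨hb.1.1, hb.2⟩)).1 hb.1.2

lemma exists_order {V : Type*} (H : SimpleGraph V)
    (hch : ∀ m : ℕ, 4 ≤ m → IsEmpty (SimpleGraph.cycleGraph m ↪g H)) (n : ℕ) :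
    ∀ S : Finset V, S.card = n + 2 → TwoConn H (S : Set V) →
    ∃ f : ℕ → V, (∀ a < n + 2, f a ∈ S) ∧ (∀ a < n + 2, ∀ b < n + 2, f a = f b → a = b) ∧
      H.Adj (f 0) (f 1) ∧
      ∀ j, 2 ≤ j → j < n + 2 →
        (∃ a b, a < b ∧ b < j ∧ H.Adj (f a) (f j) ∧ H.Adj (f b) (f j)) ∧
        (∀ a < j, ∀ b < j, a ≠ b → H.Adj (f a) (f j) → H.Adj (f b) (f j) →
          H.Adj (f a) (f b)) := by
  classical
  induction n with
  | zero =>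
    intro S hc hS
    obtain ⟨a, b, hab, rfl⟩ := Finset.card_eq_two.1 hc
    obtain ⟨y, hy, hay⟩ := exists_nbr hab (hS ∅ (by simp) a (by simp) b (by simp))
    refine ⟨fun k => if k = 0 then a else y, ?_, ?_, by simpa using hay, by intros; omega⟩
    · intro k _
      dsimp only
      split_ifs
      · simp
      · simpa using hy
    · intro k hk l hl h
      dsimp only at h
      split_ifs at h
      · omega
      · exact (hay.ne h).elim
      · exact (hay.ne h.symm).elim
      · omega
  | succ n ih =>
    intro S hc hS
    obtain ⟨v, hvS, -, hv⟩ := exists_simplicial H hch S ∅ (by simp)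
      (by rintro rfl; simp at hc) (by simp)
    have hS' : TwoConn H ((S.erase v : Finset V) : Set V) := by
      rw [Finset.coe_erase]
      exact hS.erase v (fun a ha b hb => hv a ha b hb)
    have hc' : (S.erase v).card = n + 2 := by rw [Finset.card_erase_of_mem hvS]; omega
    obtain ⟨f, hfS, hfi, hf01, hf⟩ := ih _ hc' hS'
    have himg : ∀ y ∈ S, y ≠ v → ∃ k < n + 2, f k = y := by
      have : (Finset.range (n+2)).image f = S.erase v := by
        apply Finset.eq_of_subset_of_card_le
        · intro y hy
          obtain ⟨k, hk, rfl⟩ := Finset.mem_image.1 hy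
          exact hfS k (Finset.mem_range.1 hk)
        · rw [hc', Finset.card_image_of_injOn, Finset.card_range]
          intro a ha b hb h
          exact hfi a (by simpa using ha) b (by simpa using hb) h
      intro y hy hyv
      have hy' : y ∈ (Finset.range (n+2)).image f := by
        rw [this]; exact Finset.mem_erase.2 ⟨hyv, hy⟩
      obtain ⟨k, hk, h⟩ := Finset.mem_image.1 hy'
      exact ⟨k, Finset.mem_range.1 hk, h⟩
    have hnbr : ∀ X : Set V, X.Subsingleton → v ∉ X → ∀ b ∈ S, b ≠ v → b ∉ X →
        ∃ k < n + 2, f k ∉ X ∧ H.Adj (f k) v := by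
      intro X hX hvX b hb hbv hbX
      obtain ⟨y, hy, hvy⟩ := exists_nbr hbv.symm (hS X hX v ⟨hvS, hvX⟩ b ⟨hb, hbX⟩)
      obtain ⟨k, hk, rfl⟩ := himg y hy.1 hvy.ne'
      exact ⟨k, hk, hy.2, hvy.symm⟩
    have hmemS : ∀ k < n + 2, f k ∈ S ∧ f k ≠ v := fun k hk =>
      ⟨Finset.mem_of_mem_erase (hfS k hk), Finset.ne_of_mem_erase (hfS k hk)⟩
    obtain ⟨k, hk, -, hkv⟩ := hnbr ∅ (by simp) (by simp) (f 0) (hmemS 0 (by omega)).1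
      (hmemS 0 (by omega)).2 (by simp)
    have hoth : ∃ l < n + 2, l ≠ k := by
      by_cases h : k = 0
      · exact ⟨1, by omega, by omega⟩
      · exact ⟨0, by omega, by omega⟩
    obtain ⟨l, hl, hlk⟩ := hoth
    obtain ⟨m, hm, hmk, hmv⟩ := hnbr {f k} (by simp) (by simpa using hkv.ne')
      (f l) (hmemS l hl).1 (hmemS l hl).2
      (by simpa using fun h => hlk (hfi l hl k hk h))
    have hmk' : m ≠ k := by rintro rfl; simp at hmk
    set g : ℕ → V := fun t => if t < n + 2 then f t else v with hg
    have g1 : ∀ t, t < n + 2 → g t = f t := fun t ht => by simp [hg, ht]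
    have g2 : g (n+2) = v := by simp [hg]
    refine ⟨g, ?_, ?_, ?_, ?_⟩
    · intro a _
      simp only [hg]
      split_ifs with h
      · exact (hmemS a h).1
      · exact hvS
    · intro a ha b hb h
      simp only [hg] at h
      split_ifs at h with h1 h2 h2
      · exact hfi a h1 b h2 h
      · exact ((hmemS a h1).2 h).elim
      · exact ((hmemS b h2).2 h.symm).elim
      · omega
    · rw [g1 0 (by omega), g1 1 (by omega)]; exact hf01
    · intro j hj hjn
      by_cases hjl : j < n + 2
      · obtain ⟨⟨a, b, hab, hbj, h1, h2⟩, h3⟩ := hf j hj hjl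
        rw [g1 j hjl]
        constructor
        · refine ⟨a, b, hab, hbj, ?_, ?_⟩
          · rwa [g1 a (by omega)]
          · rwa [g1 b (by omega)]
        · intro a ha b hb
          rw [g1 a (by omega), g1 b (by omega)]
          exact h3 a ha b hb
      · obtain rfl : j = n + 2 := by omega
        rw [g2]
        constructor
        · rcases lt_or_gt_of_ne hmk' with h | h
          · exact ⟨m, k, h, hk, by rwa [g1 m hm], by rwa [g1 k hk]⟩
          · exact ⟨k, m, h, hm, by rwa [g1 k hk], by rwa [g1 m hm]⟩
        · intro a ha b hb hab
          rw [g1 a ha, g1 b hb]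
          intro h1 h2
          exact hv _ (hmemS a ha).1 _ (hmemS b hb).1 h1.symm h2.symm
            (fun h => hab (hfi a ha b hb h))


/-- Every 2-connected chordal graph `H` on `i + 1` vertices (`i ≥ 1`) is isomorphic
to a graph on vertex set `{0, 1, ..., i}` in which: `0` and `1` are adjacent; for
every `j ∈ {1, ..., i-1}`, vertex `j + 1` has at least 2 neighbours in `{0, ..., j}`;
and these neighbours form a clique. -/
theorem stmt11 {V : Type*} [Fintype V] (i : ℕ) (hi : 1 ≤ i)
    (H : SimpleGraph V) (hcard : Fintype.card V = i + 1)
    (hconn : H.Connected) (hcard3 : 3 ≤ Fintype.card V)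
    (hdel : ∀ v : V, ((⊤ : H.Subgraph).deleteVerts {v}).coe.Connected)
    (hchordal : ∀ m : ℕ, 4 ≤ m → IsEmpty (SimpleGraph.cycleGraph m ↪g H)) :
    ∃ G : SimpleGraph (Fin (i + 1)),
      G.Adj ⟨0, by omega⟩ ⟨1, by omega⟩ ∧
      (∀ j : ℕ, ∀ _hj : 1 ≤ j ∧ j ≤ i - 1,
        2 ≤ {v : Fin (i + 1) | v.val ≤ j ∧ G.Adj v ⟨j + 1, by omega⟩}.ncard) ∧
      (∀ j : ℕ, ∀ _hj : 1 ≤ j ∧ j ≤ i - 1,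
        G.IsClique {v : Fin (i + 1) | v.val ≤ j ∧ G.Adj v ⟨j + 1, by omega⟩}) ∧
      Nonempty (H ≃g G) := by
  classical
  have hT : TwoConn H ((Finset.univ : Finset V) : Set V) := by
    intro X hX a ha b hb
    rcases hX.eq_empty_or_singleton with rfl | ⟨x, rfl⟩
    · refine (hconn.preconnected a b).mono ?_
      intro p q h
      exact ⟨h, by simp, by simp⟩
    · have hax : a ≠ x := ha.2
      have hbx : b ≠ x := hb.2
      have h := (hdel x).preconnected ⟨a, by simpa using hax⟩ ⟨b, by simpa using hbx⟩
      let φ : ((⊤ : H.Subgraph).deleteVerts {x}).coe →g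
          restr H (((Finset.univ : Finset V) : Set V) \ {x}) :=
        ⟨fun z => z.1, by
          intro p q hpq
          refine ⟨(SimpleGraph.Subgraph.coe_adj _ _ _ ▸ hpq : ((⊤ : H.Subgraph).deleteVerts {x}).Adj p.1 q.1).adj_sub, ?_, ?_⟩
          · simpa using p.2
          · simpa using q.2⟩
      exact h.map φ
  obtain ⟨n, rfl⟩ : ∃ n, i = n + 1 := ⟨i - 1, by omega⟩
  obtain ⟨f, -, hfi, hf01, hf⟩ := exists_order H hchordal n Finset.univ
    (by rw [Finset.card_univ, hcard]) hT
  have hbij : Function.Bijective (fun k : Fin (n + 1 + 1) => f k.val) := by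
    rw [Fintype.bijective_iff_injective_and_card]
    refine ⟨fun a b h => Fin.ext (hfi _ a.2 _ b.2 h), by simp [hcard]⟩
  let e := Equiv.ofBijective _ hbij
  refine ⟨H.comap e, hf01, ?_, ?_, ⟨(SimpleGraph.Iso.comap e H).symm⟩⟩
  · intro j hj
    obtain ⟨⟨a, b, hab, hbj, h1, h2⟩, -⟩ := hf (j + 1) (by omega) (by omega)
    have hne : (⟨a, by omega⟩ : Fin (n + 1 + 1)) ≠ ⟨b, by omega⟩ := by
      intro h; rw [Fin.mk.injEq] at h; omega
    rw [← Set.ncard_pair hne]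
    apply Set.ncard_le_ncard _ (Set.toFinite _)
    rintro z (rfl | rfl)
    · exact ⟨by dsimp only; omega, h1⟩
    · exact ⟨by dsimp only; omega, h2⟩
  · intro j hj a ha b hb hab
    obtain ⟨-, h3⟩ := hf (j + 1) (by omega) (by omega)
    exact h3 a.val (Nat.lt_succ_of_le ha.1) b.val (Nat.lt_succ_of_le hb.1)
      (fun h => hab (Fin.ext h)) ha.2 hb.2
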